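/- Let M : ℝ^d → ℝ be positive, twice continuously differentiable, satisfying C₁⟨v⟩^{−γ} ≤ M(v) ≤ C₂⟨v⟩^{−γ} and |∇M(v)| ≤ C₃⟨v⟩^{−γ} for all v, with γ > d/2, and suppose the potential W := ΔM/M satisfies |W(v)| ≤ C₄⟨v⟩² for all v (i.e. ⟨v⟩^{−2}W is bounded). Then ∫_{ℝ^d} ⟨v⟩² |∇( M(v) ⟨v⟩^{−2} )|² dv = − ∫_{ℝ^d} W(v) M(v)² ⟨v⟩^{−2} dv + d ∫_{ℝ^d} M(v)² ⟨v⟩^{−4} dv; in particular this quantity is finite, so Assumption (A2) holds. -/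

import Mathlib

open MeasureTheory Real

noncomputable section

/-- The Laplacian on `ℝ^d`, as the sum of the second partial derivatives. -/
def lap {d : ℕ} (f : EuclideanSpace ℝ (Fin d) → ℝ) (v : EuclideanSpace ℝ (Fin d)) : ℝ :=
  ∑ i : Fin d, fderiv ℝ (fun w => fderiv ℝ f w (EuclideanSpace.single i (1 : ℝ))) v
    (EuclideanSpace.single i (1 : ℝ))

open Filter Topology in
/-- The integral of an integrable divergence of an integrable `C¹` field vanishes. -/
theorem integral_div_zero {d : ℕ} (F : Fin d → EuclideanSpace ℝ (Fin d) → ℝ)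
    (hF : ∀ i, ContDiff ℝ 1 (F i)) (hFi : ∀ i, Integrable (F i))
    (hdiv : Integrable (fun v => ∑ i, fderiv ℝ (F i) v (EuclideanSpace.single i (1 : ℝ)))) :
    ∫ v, ∑ i, fderiv ℝ (F i) v (EuclideanSpace.single i (1 : ℝ)) = 0 := by
  let χ : ContDiffBump (0 : EuclideanSpace ℝ (Fin d)) := ⟨1, 2, one_pos, one_lt_two⟩
  have hχ1 : ContDiff ℝ 1 χ := χ.contDiff
  obtain ⟨K, hK⟩ : ∃ K, ∀ x, ‖fderiv ℝ χ x‖ ≤ K :=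
    (χ.hasCompactSupport.fderiv (𝕜 := ℝ)).exists_bound_of_continuous
      (hχ1.continuous_fderiv one_ne_zero)
  let c : ℕ → ℝ := fun n => 1 / ((n : ℝ) + 1)
  have hc0 : ∀ n, 0 < c n := fun n => by positivity
  have hc : Tendsto c atTop (𝓝 0) := tendsto_one_div_add_atTop_nhds_zero_nat
  have hcD : ∀ n, ContDiff ℝ 1 (fun v => χ (c n • v)) := fun n =>
    hχ1.comp (contDiff_const_smul (c n))
  have hcS : ∀ n, HasCompactSupport (fun v => χ (c n • v)) := fun n =>
    χ.hasCompactSupport.comp_smul (hc0 n).ne'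
  have hfd : ∀ n v, fderiv ℝ (fun v => χ (c n • v)) v = c n • fderiv ℝ χ (c n • v) := by
    intro n v
    exact fderiv_comp_smul (𝕜 := ℝ) (f := χ) (c n)
  -- integration by parts against the cutoff
  have hibp : ∀ n, ∫ v, χ (c n • v) * ∑ i, fderiv ℝ (F i) v (EuclideanSpace.single i (1 : ℝ))
      = - ∫ v, ∑ i, fderiv ℝ (fun v => χ (c n • v)) v (EuclideanSpace.single i (1 : ℝ)) * F i v := by
    intro n
    have c1 : ∀ i, Continuous fun v => fderiv ℝ (F i) v (EuclideanSpace.single i (1 : ℝ)) :=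
      fun i => ((hF i).continuous_fderiv one_ne_zero).clm_apply continuous_const
    have c2 : ∀ i : Fin d, Continuous fun v =>
        fderiv ℝ (fun v => χ (c n • v)) v (EuclideanSpace.single i (1 : ℝ)) :=
      fun i => ((hcD n).continuous_fderiv one_ne_zero).clm_apply continuous_const
    have i1 : ∀ i, Integrable fun v =>
        χ (c n • v) * fderiv ℝ (F i) v (EuclideanSpace.single i (1 : ℝ)) := fun i =>
      ((hcD n).continuous.mul (c1 i)).integrable_of_hasCompactSupport (hcS n).mul_right
    have i2 : ∀ i : Fin d, Integrable fun v =>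
        fderiv ℝ (fun v => χ (c n • v)) v (EuclideanSpace.single i (1 : ℝ)) * F i v := fun i =>
      ((c2 i).mul (hF i).continuous).integrable_of_hasCompactSupport
        ((hcS n).fderiv_apply (𝕜 := ℝ) _).mul_right
    have i3 : ∀ i : Fin d, Integrable fun v => χ (c n • v) * F i v := fun i =>
      ((hcD n).continuous.mul (hF i).continuous).integrable_of_hasCompactSupport
        (hcS n).mul_right
    simp_rw [Finset.mul_sum]
    rw [integral_finsetSum _ (fun i _ => i1 i), integral_finsetSum _ (fun i _ => i2 i),
      ← Finset.sum_neg_distrib]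
    refine Finset.sum_congr rfl fun i _ => ?_
    exact integral_mul_fderiv_eq_neg_fderiv_mul_of_integrable (i2 i) (i1 i) (i3 i)
      (fun x _ => (hcD n).differentiable one_ne_zero x)
      (fun x _ => (hF i).differentiable one_ne_zero x)
  have hL : Tendsto (fun n => ∫ v, χ (c n • v) *
      ∑ i, fderiv ℝ (F i) v (EuclideanSpace.single i (1 : ℝ))) atTop
      (𝓝 (∫ v, ∑ i, fderiv ℝ (F i) v (EuclideanSpace.single i (1 : ℝ)))) := by
    refine tendsto_integral_of_dominated_convergence _ (fun n => ?_) hdiv.norm (fun n => ?_) ?_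
    · exact (hcD n).continuous.aestronglyMeasurable.mul hdiv.aestronglyMeasurable
    · refine Eventually.of_forall fun v => ?_
      rw [norm_mul, Real.norm_of_nonneg χ.nonneg]
      exact mul_le_of_le_one_left (norm_nonneg _) χ.le_one
    · refine Eventually.of_forall fun v => ?_
      have h1 : Tendsto (fun n => χ (c n • v)) atTop (𝓝 1) := by
        have : Tendsto (fun n => χ (c n • v)) atTop (𝓝 (χ ((0 : ℝ) • v))) :=
          (χ.continuous.tendsto _).comp (hc.smul_const v)
        rwa [zero_smul, χ.one_of_mem_closedBall (by simp [χ])] at this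
      simpa using h1.mul_const (∑ i, fderiv ℝ (F i) v (EuclideanSpace.single i (1 : ℝ)))
  have hR : Tendsto (fun n => ∫ v, ∑ i, fderiv ℝ (fun v => χ (c n • v)) v
      (EuclideanSpace.single i (1 : ℝ)) * F i v) atTop
      (𝓝 (∫ _ : EuclideanSpace ℝ (Fin d), (0 : ℝ))) := by
    have hb : ∀ n v (i : Fin d), ‖fderiv ℝ (fun v => χ (c n • v)) v
        (EuclideanSpace.single i (1 : ℝ))‖ ≤ c n * K := by
      intro n v i
      refine (ContinuousLinearMap.le_opNorm _ _).trans ?_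
      rw [hfd, norm_smul, Real.norm_of_nonneg (hc0 n).le]
      simp only [EuclideanSpace.norm_single, norm_one, mul_one]
      exact mul_le_mul_of_nonneg_left (hK _) (hc0 n).le
    have hK0 : 0 ≤ K := (norm_nonneg _).trans (hK 0)
    have hb2 : ∀ n v, ‖∑ i, fderiv ℝ (fun v => χ (c n • v)) v
      (EuclideanSpace.single i (1 : ℝ)) * F i v‖ ≤ c n * (K * ∑ i, ‖F i v‖) := by
      intro n v
      refine (norm_sum_le _ _).trans ?_
      rw [← mul_assoc, Finset.mul_sum]
      refine Finset.sum_le_sum fun i _ => ?_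
      rw [norm_mul]
      exact mul_le_mul_of_nonneg_right (hb n v i) (norm_nonneg _)
    refine tendsto_integral_of_dominated_convergence (fun v => K * ∑ i, ‖F i v‖)
      (fun n => ?_) ?_ (fun n => ?_) ?_
    · refine Continuous.aestronglyMeasurable ?_
      refine continuous_finsetSum _ fun i _ => ?_
      exact (((hcD n).continuous_fderiv one_ne_zero).clm_apply continuous_const).mul
        (hF i).continuous
    · exact (integrable_finsetSum _ fun i _ => (hFi i).norm).const_mul K
    · refine Eventually.of_forall fun v => (hb2 n v).trans ?_
      refine mul_le_of_le_one_left (by positivity) ?_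
      simp only [c]
      rw [div_le_one (by positivity)]
      linarith [(Nat.cast_nonneg n : (0 : ℝ) ≤ n)]
    · refine Eventually.of_forall fun v => ?_
      refine squeeze_zero_norm (fun n => hb2 n v) ?_
      simpa using hc.mul_const (K * ∑ i, ‖F i v‖)
  have hR' := hR.neg
  simp_rw [← hibp] at hR'
  simpa using tendsto_nhds_unique hL hR'

theorem norm_sq_dual {d : ℕ} (L : EuclideanSpace ℝ (Fin d) →L[ℝ] ℝ) :
    ‖L‖ ^ 2 = ∑ i, (L (EuclideanSpace.single i (1 : ℝ))) ^ 2 := by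
  obtain ⟨x, rfl⟩ := (InnerProductSpace.toDual ℝ (EuclideanSpace ℝ (Fin d))).surjective L
  rw [LinearIsometryEquiv.norm_map, EuclideanSpace.norm_sq_eq]
  refine Finset.sum_congr rfl fun i _ => ?_
  simp [InnerProductSpace.toDual_apply_apply, EuclideanSpace.inner_single_right]

/-- The line derivative of `1 + ‖v‖²`. -/
theorem line_g {d : ℕ} (v : EuclideanSpace ℝ (Fin d)) (i : Fin d) :
    HasLineDerivAt ℝ (fun w => 1 + ‖w‖ ^ 2) (2 * v i) v (EuclideanSpace.single i (1 : ℝ)) := by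
  have h := ((hasStrictFDerivAt_norm_sq v).hasFDerivAt.const_add 1).hasLineDerivAt
    (EuclideanSpace.single i (1 : ℝ))
  have e : (2 • (innerSL ℝ) v) (EuclideanSpace.single i (1 : ℝ)) = 2 * v i := by
    rw [ContinuousLinearMap.smul_apply, innerSL_apply_apply, EuclideanSpace.inner_single_right]
    simp
  rw [← e]
  exact h

theorem line_coord {d : ℕ} (v : EuclideanSpace ℝ (Fin d)) (i : Fin d) :
    HasLineDerivAt ℝ (fun w : EuclideanSpace ℝ (Fin d) => w i) 1 v
      (EuclideanSpace.single i (1 : ℝ)) := by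
  have h := (EuclideanSpace.proj (𝕜 := ℝ) i : EuclideanSpace ℝ (Fin d) →L[ℝ] ℝ).hasFDerivAt
    (x := v) |>.hasLineDerivAt (EuclideanSpace.single i (1 : ℝ))
  simpa using h

theorem deriv_quot {d : ℕ} (M : EuclideanSpace ℝ (Fin d) → ℝ) (hM : ContDiff ℝ 2 M)
    (v : EuclideanSpace ℝ (Fin d)) (i : Fin d) :
    fderiv ℝ (fun w => M w / (1 + ‖w‖ ^ 2)) v (EuclideanSpace.single i (1 : ℝ)) =
      fderiv ℝ M v (EuclideanSpace.single i (1 : ℝ)) / (1 + ‖v‖ ^ 2)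
        - 2 * v i * M v / (1 + ‖v‖ ^ 2) ^ 2 := by
  have hg : ∀ w : EuclideanSpace ℝ (Fin d), 1 + ‖w‖ ^ 2 ≠ 0 := fun w => by positivity
  have hgD : ContDiff ℝ 2 (fun w : EuclideanSpace ℝ (Fin d) => 1 + ‖w‖ ^ 2) :=
    contDiff_const.add (contDiff_norm_sq ℝ)
  have hD := ((hM.div hgD hg).differentiable two_ne_zero v).hasFDerivAt.hasLineDerivAt
    (EuclideanSpace.single i (1 : ℝ))
  have h1 : HasLineDerivAt ℝ M _ v (EuclideanSpace.single i (1 : ℝ)) :=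
    (hM.differentiable two_ne_zero v).hasFDerivAt.hasLineDerivAt _
  have h := HasDerivAt.div h1 (line_g v i) (by simpa using hg v)
  have := hD.unique h
  refine this.trans ?_
  have := hg v
  simp only [zero_smul, add_zero]
  field_simp

theorem deriv_field {d : ℕ} (M : EuclideanSpace ℝ (Fin d) → ℝ) (hM : ContDiff ℝ 2 M)
    (i : Fin d) :
    ContDiff ℝ 1 (fun w => M w * fderiv ℝ M w (EuclideanSpace.single i (1 : ℝ)) / (1 + ‖w‖ ^ 2)
      - w i * M w ^ 2 / (1 + ‖w‖ ^ 2) ^ 2) ∧ ∀ v,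
    fderiv ℝ (fun w => M w * fderiv ℝ M w (EuclideanSpace.single i (1 : ℝ)) / (1 + ‖w‖ ^ 2)
      - w i * M w ^ 2 / (1 + ‖w‖ ^ 2) ^ 2) v (EuclideanSpace.single i (1 : ℝ)) =
      (1 + ‖v‖ ^ 2) * (fderiv ℝ M v (EuclideanSpace.single i (1 : ℝ)) / (1 + ‖v‖ ^ 2)
        - 2 * v i * M v / (1 + ‖v‖ ^ 2) ^ 2) ^ 2
      + M v * fderiv ℝ (fun w => fderiv ℝ M w (EuclideanSpace.single i (1 : ℝ))) v
          (EuclideanSpace.single i (1 : ℝ)) / (1 + ‖v‖ ^ 2)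
      - M v ^ 2 / (1 + ‖v‖ ^ 2) ^ 2 := by
  have hg : ∀ w : EuclideanSpace ℝ (Fin d), 1 + ‖w‖ ^ 2 ≠ 0 := fun w => by positivity
  have hgD : ContDiff ℝ 1 (fun w : EuclideanSpace ℝ (Fin d) => 1 + ‖w‖ ^ 2) :=
    contDiff_const.add (contDiff_norm_sq ℝ)
  have hM1 : ContDiff ℝ 1 M := hM.of_le one_le_two
  have hP : ContDiff ℝ 1 (fun w => fderiv ℝ M w (EuclideanSpace.single i (1 : ℝ))) :=
    (hM.fderiv_right (m := 1) (by norm_num)).clm_apply contDiff_const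
  have hco : ContDiff ℝ 1 (fun w : EuclideanSpace ℝ (Fin d) => w i) :=
    (EuclideanSpace.proj (𝕜 := ℝ) i : EuclideanSpace ℝ (Fin d) →L[ℝ] ℝ).contDiff
  have hF : ContDiff ℝ 1 (fun w => M w * fderiv ℝ M w (EuclideanSpace.single i (1 : ℝ)) /
      (1 + ‖w‖ ^ 2) - w i * M w ^ 2 / (1 + ‖w‖ ^ 2) ^ 2) :=
    ((hM1.mul hP).div hgD hg).sub
      ((hco.mul (hM1.pow 2)).div (hgD.pow 2) (fun w => pow_ne_zero 2 (hg w)))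
  refine ⟨hF, fun v => ?_⟩
  have hD := (hF.differentiable one_ne_zero v).hasFDerivAt.hasLineDerivAt
    (EuclideanSpace.single i (1 : ℝ))
  have h1 : HasLineDerivAt ℝ M _ v (EuclideanSpace.single i (1 : ℝ)) :=
    (hM.differentiable two_ne_zero v).hasFDerivAt.hasLineDerivAt _
  have h2 : HasLineDerivAt ℝ (fun w => fderiv ℝ M w (EuclideanSpace.single i (1 : ℝ))) _ v
      (EuclideanSpace.single i (1 : ℝ)) :=
    (hP.differentiable one_ne_zero v).hasFDerivAt.hasLineDerivAt _
  have hg0 := hg v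
  have h := HasDerivAt.sub (HasDerivAt.div (HasDerivAt.mul h1 h2) (line_g v i)
    (by simpa using hg0)) (HasDerivAt.div (HasDerivAt.mul (line_coord v i) (HasDerivAt.pow h1 2))
      (HasDerivAt.pow (line_g v i) 2) (by simpa using hg0))
  rw [hD.unique h]
  simp only [zero_smul, add_zero, Pi.mul_apply, Pi.pow_apply]
  field_simp
  ring

/-- **The integration-by-parts identity of Section 5.1 (comment 4) of the paper**:
if `⟨v⟩^{-2} W` is bounded, with `W := ΔM/M`, then
`∫ ⟨v⟩² |∇(M⟨v⟩⁻²)|² dv = −∫ W M² ⟨v⟩⁻² dv + d ∫ M² ⟨v⟩⁻⁴ dv`, which is finite;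
in particular Assumption (A2) holds. -/
theorem assumption_A2_from_potential_bound (d : ℕ) (hd : 1 ≤ d) (γ C₁ C₂ C₃ C₄ : ℝ)
    (hγ : (d : ℝ) / 2 < γ) (hC₁ : 0 < C₁) (hC₁₂ : C₁ ≤ C₂)
    (M : EuclideanSpace ℝ (Fin d) → ℝ) (hMpos : ∀ v, 0 < M v) (hM : ContDiff ℝ 2 M)
    (hA1 : ∀ v, C₁ * Real.sqrt (1 + ‖v‖ ^ 2) ^ (-γ) ≤ M v ∧
              M v ≤ C₂ * Real.sqrt (1 + ‖v‖ ^ 2) ^ (-γ))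
    (hgradM : ∀ v, ‖fderiv ℝ M v‖ ≤ C₃ * Real.sqrt (1 + ‖v‖ ^ 2) ^ (-γ))
    (hW : ∀ v, |lap M v / M v| ≤ C₄ * (1 + ‖v‖ ^ 2)) :
    Integrable (fun v =>
        (1 + ‖v‖ ^ 2) * ‖fderiv ℝ (fun w => M w / (1 + ‖w‖ ^ 2)) v‖ ^ 2) ∧
    (∫ v, (1 + ‖v‖ ^ 2) * ‖fderiv ℝ (fun w => M w / (1 + ‖w‖ ^ 2)) v‖ ^ 2) =
      -(∫ v, (lap M v / M v) * (M v) ^ 2 / (1 + ‖v‖ ^ 2)) +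
        (d : ℝ) * ∫ v, (M v) ^ 2 / (1 + ‖v‖ ^ 2) ^ 2 := by
  obtain ⟨h, hh⟩ : ∃ h : EuclideanSpace ℝ (Fin d) → ℝ,
      h = fun v => Real.sqrt (1 + ‖v‖ ^ 2) ^ (-γ) := ⟨_, rfl⟩
  have hpos : ∀ v, 0 < h v := fun v => by rw [hh]; positivity
  have hint : Integrable (fun v => h v ^ 2) := by
    have := integrable_rpow_neg_one_add_norm_sq (E := EuclideanSpace ℝ (Fin d))
      (μ := volume) (r := 2 * γ) (by simp; linarith)
    convert this using 2 with v
    rw [hh]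
    simp only
    rw [Real.sqrt_eq_rpow, ← Real.rpow_mul (by positivity), ← Real.rpow_natCast,
      ← Real.rpow_mul (by positivity)]
    congr 1
    push_cast
    ring
  have hMh : ∀ v, M v ≤ C₂ * h v := fun v => by rw [hh]; exact (hA1 v).2
  have hGh : ∀ v, ‖fderiv ℝ M v‖ ≤ C₃ * h v := fun v => by rw [hh]; exact hgradM v
  have hg1 : ∀ w : EuclideanSpace ℝ (Fin d), 1 ≤ 1 + ‖w‖ ^ 2 := fun w => by
    linarith [sq_nonneg ‖w‖]
  have hg : ∀ w : EuclideanSpace ℝ (Fin d), 1 + ‖w‖ ^ 2 ≠ 0 := fun w => by positivity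
  have hMM : ∀ v, M v ^ 2 ≤ C₂ ^ 2 * h v ^ 2 := fun v => by
    rw [← mul_pow]; exact pow_le_pow_left₀ (hMpos v).le (hMh v) 2
  have hpart : ∀ v (i : Fin d), |fderiv ℝ M v (EuclideanSpace.single i (1 : ℝ))| ≤ C₃ * h v := by
    intro v i
    refine le_trans ?_ (hGh v)
    simpa using (fderiv ℝ M v).le_opNorm (EuclideanSpace.single i (1 : ℝ))
  have hgc : Continuous (fun w : EuclideanSpace ℝ (Fin d) => 1 + ‖w‖ ^ 2) := by fun_prop
  have hvle : ∀ v : EuclideanSpace ℝ (Fin d), ‖v‖ ≤ 1 + ‖v‖ ^ 2 := fun v => by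
    nlinarith [sq_nonneg (‖v‖ - 1)]
  have hcoord : ∀ (v : EuclideanSpace ℝ (Fin d)) i, |v i| ≤ ‖v‖ := fun v i =>
    PiLp.norm_apply_le v i
  -- continuity facts
  have hQ : ContDiff ℝ 2 (fun w => M w / (1 + ‖w‖ ^ 2)) :=
    hM.div (contDiff_const.add (contDiff_norm_sq ℝ)) hg
  have hlapc : Continuous (lap M) := by
    unfold lap
    refine continuous_finsetSum _ fun i _ => ?_
    have hP : ContDiff ℝ 1 (fun w => fderiv ℝ M w (EuclideanSpace.single i (1 : ℝ))) :=
      (hM.fderiv_right (m := 1) (by norm_num)).clm_apply contDiff_const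
    exact (hP.continuous_fderiv one_ne_zero).clm_apply continuous_const
  -- integrability of the three terms
  have I3 : Integrable (fun v => M v ^ 2 / (1 + ‖v‖ ^ 2) ^ 2) := by
    refine (hint.const_mul (C₂ ^ 2)).mono' (Continuous.aestronglyMeasurable
      ((hM.continuous.pow 2).div (hgc.pow 2) fun v => pow_ne_zero 2 (hg v))) ?_
    refine Filter.Eventually.of_forall fun v => ?_
    rw [Real.norm_of_nonneg (by positivity)]
    exact (div_le_self (sq_nonneg _) (one_le_pow₀ (hg1 v))).trans (hMM v)
  have I2 : Integrable (fun v => lap M v / M v * M v ^ 2 / (1 + ‖v‖ ^ 2)) := by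
    refine (hint.const_mul (C₄ * C₂ ^ 2)).mono' (Continuous.aestronglyMeasurable
      (((hlapc.div hM.continuous fun v => (hMpos v).ne').mul (hM.continuous.pow 2)).div hgc hg)) ?_
    refine Filter.Eventually.of_forall fun v => ?_
    have hp : 0 < 1 + ‖v‖ ^ 2 := by positivity
    rw [Real.norm_eq_abs, abs_div, abs_mul, abs_of_pos hp, abs_of_nonneg (sq_nonneg (M v)),
      div_le_iff₀ hp]
    have hC4 : 0 ≤ C₄ := by
      by_contra hneg
      have := (abs_nonneg _).trans (hW v)
      nlinarith
    calc |lap M v / M v| * M v ^ 2 ≤ C₄ * (1 + ‖v‖ ^ 2) * (C₂ ^ 2 * h v ^ 2) :=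
          mul_le_mul (hW v) (hMM v) (sq_nonneg _) (by positivity)
      _ = _ := by ring
  have hIpt : ∀ v (i : Fin d), |fderiv ℝ M v (EuclideanSpace.single i (1 : ℝ)) / (1 + ‖v‖ ^ 2)
        - 2 * v i * M v / (1 + ‖v‖ ^ 2) ^ 2| ≤ (C₃ + 2 * C₂) * h v / (1 + ‖v‖ ^ 2) := by
    intro v i
    have hp : 0 < 1 + ‖v‖ ^ 2 := by positivity
    have e : fderiv ℝ M v (EuclideanSpace.single i (1 : ℝ)) / (1 + ‖v‖ ^ 2)
        - 2 * v i * M v / (1 + ‖v‖ ^ 2) ^ 2 =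
        (fderiv ℝ M v (EuclideanSpace.single i (1 : ℝ)) - 2 * (v i / (1 + ‖v‖ ^ 2)) * M v) /
          (1 + ‖v‖ ^ 2) := by field_simp
    rw [e, abs_div, abs_of_pos hp]
    refine div_le_div_of_nonneg_right ?_ hp.le
    refine (abs_sub _ _).trans ?_
    have h1 : |v i / (1 + ‖v‖ ^ 2)| ≤ 1 := by
      rw [abs_div, abs_of_pos hp, div_le_one hp]
      exact (hcoord v i).trans (hvle v)
    have h2 : |2 * (v i / (1 + ‖v‖ ^ 2)) * M v| ≤ 2 * (C₂ * h v) := by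
      rw [abs_mul, abs_mul, abs_two, abs_of_pos (hMpos v), mul_assoc]
      refine mul_le_mul_of_nonneg_left ?_ two_pos.le
      exact (mul_le_of_le_one_left (hMpos v).le h1).trans (hMh v)
    linarith [hpart v i]
  have hnorm : ∀ v, (1 + ‖v‖ ^ 2) * ‖fderiv ℝ (fun w => M w / (1 + ‖w‖ ^ 2)) v‖ ^ 2 =
      ∑ i, (1 + ‖v‖ ^ 2) * (fderiv ℝ M v (EuclideanSpace.single i (1 : ℝ)) / (1 + ‖v‖ ^ 2)
        - 2 * v i * M v / (1 + ‖v‖ ^ 2) ^ 2) ^ 2 := by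
    intro v
    rw [norm_sq_dual, Finset.mul_sum]
    exact Finset.sum_congr rfl fun i _ => by rw [deriv_quot M hM v i]
  have I1 : Integrable (fun v =>
      (1 + ‖v‖ ^ 2) * ‖fderiv ℝ (fun w => M w / (1 + ‖w‖ ^ 2)) v‖ ^ 2) := by
    refine (hint.const_mul (d * (C₃ + 2 * C₂) ^ 2)).mono' (Continuous.aestronglyMeasurable
      (hgc.mul ((hQ.continuous_fderiv two_ne_zero).norm.pow 2))) ?_
    refine Filter.Eventually.of_forall fun v => ?_
    rw [Real.norm_of_nonneg (by positivity), hnorm v]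
    have hp : 0 < 1 + ‖v‖ ^ 2 := by positivity
    calc _ ≤ ∑ i : Fin d, (C₃ + 2 * C₂) ^ 2 * h v ^ 2 := by
          refine Finset.sum_le_sum fun i _ => ?_
          have h1 := pow_le_pow_left₀ (abs_nonneg _) (hIpt v i) 2
          rw [sq_abs] at h1
          refine (mul_le_mul_of_nonneg_left h1 hp.le).trans ?_
          have e : (1 + ‖v‖ ^ 2) * ((C₃ + 2 * C₂) * h v / (1 + ‖v‖ ^ 2)) ^ 2 =
            (C₃ + 2 * C₂) ^ 2 * h v ^ 2 / (1 + ‖v‖ ^ 2) := by field_simp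
          rw [e]
          exact div_le_self (by positivity) (hg1 v)
      _ = _ := by simp; ring
  refine ⟨I1, ?_⟩
  -- the field
  let F : Fin d → EuclideanSpace ℝ (Fin d) → ℝ := fun i w =>
    M w * fderiv ℝ M w (EuclideanSpace.single i (1 : ℝ)) / (1 + ‖w‖ ^ 2)
      - w i * M w ^ 2 / (1 + ‖w‖ ^ 2) ^ 2
  have hF : ∀ i, ContDiff ℝ 1 (F i) := fun i => (deriv_field M hM i).1
  have hFi : ∀ i, Integrable (F i) := by
    intro i
    refine (hint.const_mul (C₂ * C₃ + C₂ ^ 2)).mono' (hF i).continuous.aestronglyMeasurable ?_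
    refine Filter.Eventually.of_forall fun v => ?_
    have hp : 0 < 1 + ‖v‖ ^ 2 := by positivity
    refine (abs_sub _ _).trans ?_
    have h1 : |M v * fderiv ℝ M v (EuclideanSpace.single i (1 : ℝ)) / (1 + ‖v‖ ^ 2)|
        ≤ C₂ * h v * (C₃ * h v) := by
      rw [abs_div, abs_of_pos hp, abs_mul, abs_of_pos (hMpos v)]
      refine (div_le_self (mul_nonneg (hMpos v).le (abs_nonneg _)) (hg1 v)).trans ?_
      exact mul_le_mul (hMh v) (hpart v i) (abs_nonneg _) ((hMpos v).le.trans (hMh v))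
    have h2 : |v i * M v ^ 2 / (1 + ‖v‖ ^ 2) ^ 2| ≤ C₂ ^ 2 * h v ^ 2 := by
      rw [abs_div, abs_mul, abs_of_nonneg (sq_nonneg (M v)), abs_of_pos (pow_pos hp 2),
        div_le_iff₀ (pow_pos hp 2), mul_comm]
      refine mul_le_mul (hMM v) ?_ (abs_nonneg _) (by positivity)
      refine ((hcoord v i).trans (hvle v)).trans ?_
      nlinarith [hg1 v]
    linarith
  have hdiv : ∀ v, ∑ i, fderiv ℝ (F i) v (EuclideanSpace.single i (1 : ℝ)) =
      (1 + ‖v‖ ^ 2) * ‖fderiv ℝ (fun w => M w / (1 + ‖w‖ ^ 2)) v‖ ^ 2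
      + lap M v / M v * M v ^ 2 / (1 + ‖v‖ ^ 2) - d * (M v ^ 2 / (1 + ‖v‖ ^ 2) ^ 2) := by
    intro v
    rw [Finset.sum_congr rfl fun i _ => (deriv_field M hM i).2 v, Finset.sum_sub_distrib,
      Finset.sum_add_distrib, ← hnorm v, ← Finset.sum_div, ← Finset.mul_sum]
    have e : lap M v / M v * M v ^ 2 = M v * lap M v := by
      have := (hMpos v).ne'
      field_simp
    rw [e]
    simp [lap]
  have key := integral_div_zero F hF hFi (by
    simp_rw [hdiv]
    exact (I1.add I2).sub (I3.const_mul _))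
  simp_rw [hdiv] at key
  rw [integral_sub (by exact I1.add I2) (I3.const_mul _), integral_add I1 I2,
    integral_const_mul] at key
  linarith
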